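/- Let f be a real binary quartic with distinct roots (squarefree over ℂ). If f has four distinct real roots, then the real rank of f is 4. -/

import Mathlib

open MvPolynomial

noncomputable section

/-- The real linear binary form `a·x + b·y`. -/
def lin (a b : ℝ) : MvPolynomial (Fin 2) ℝ := C a * X 0 + C b * X 1

/-- `f` is a sum of `r` terms `cⱼ · ℓⱼ^d` with `ℓⱼ` nonzero real linear forms. -/
def HasDecomp (f : MvPolynomial (Fin 2) ℝ) (d r : ℕ) : Prop :=
  ∃ c a b : Fin r → ℝ, (∀ j, (a j, b j) ≠ (0, 0)) ∧
    f = ∑ j, C (c j) * lin (a j) (b j) ^ d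

/-- The real (symmetric) rank of a binary form of degree `d`:
the least number of `d`-th powers of real linear forms needed to write `f`. -/
def realRank (f : MvPolynomial (Fin 2) ℝ) (d : ℕ) : ℕ :=
  sInf {r | HasDecomp f d r}

/-- The set of real projective roots of a binary form. -/
def projRoots (f : MvPolynomial (Fin 2) ℝ) : Set (Projectivization ℝ (Fin 2 → ℝ)) :=
  {p | eval p.rep f = 0}

/-- `f` is a product of `d` pairwise non-proportional real linear forms,
i.e. `f` has `d` distinct real roots. -/
def SplitsDistinct (f : MvPolynomial (Fin 2) ℝ) (d : ℕ) : Prop :=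
  ∃ a b : Fin d → ℝ, (∀ j, (a j, b j) ≠ (0, 0)) ∧
    (∀ i j, i ≠ j → a i * b j ≠ a j * b i) ∧
    f = ∏ j, lin (a j) (b j)

/-- `f` has distinct roots, i.e. it is squarefree as a complex polynomial. -/
def SquarefreeC (f : MvPolynomial (Fin 2) ℝ) : Prop :=
  Squarefree (MvPolynomial.map (algebraMap ℝ ℂ) f)

/-- The linear change of variables of `f` by the matrix `A`: `f(A(x,y))`. -/
def subst (A : Matrix (Fin 2) (Fin 2) ℝ) (f : MvPolynomial (Fin 2) ℝ) :
    MvPolynomial (Fin 2) ℝ :=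
  aeval (fun i => C (A i 0) * X 0 + C (A i 1) * X 1) f

/-- The complex rank of a real binary form of degree `d`. -/
def complexRank (f : MvPolynomial (Fin 2) ℝ) (d : ℕ) : ℕ :=
  sInf {r | ∃ a b : Fin r → ℂ, (∀ j, (a j, b j) ≠ (0, 0)) ∧
    MvPolynomial.map (algebraMap ℝ ℂ) f = ∑ j, (C (a j) * X 0 + C (b j) * X 1) ^ d}

/-!
Both bounds come from the polar derivative `∂_w = ∑ wᵢ ∂/∂xᵢ`, for forms `f` of any degree `d ≥ 1`
with `d` distinct real roots.

Rolle's theorem on the projective line says that `∂_w f` has at most one root fewer than `f`. If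
`f` is a sum of `r` powers `cⱼ ℓⱼ ^ d` and `w` is the zero of one `ℓⱼ`, then `∂_w f` is a sum of
`r - 1` powers; by induction a nonzero sum of `r` powers has at most `r` real roots, hence `d ≤ r`.

Conversely every nonzero form of degree `d` is a sum of `d` powers: write `∂_w f` as a sum of
`d - 1` powers of linear forms that do not vanish at `w` and integrate in direction `w`. The
primitive differs from `f` by a form killed by `∂_w`, which is a multiple of a single `d`-th power.
-/

section PolarDerivative

variable {σ R : Type*} [CommSemiring R]

/-- The derivative `∑ i, w i • ∂/∂xᵢ` in the constant direction `w`, i.e. the first polar with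
respect to the point `w`, up to the factor `deg f`. -/
def polarDeriv (w : σ → R) : Derivation R (MvPolynomial σ R) (MvPolynomial σ R) :=
  mkDerivation R fun i => C (w i)

lemma polarDeriv_X (w : σ → R) (i : σ) : polarDeriv w (X i) = C (w i) :=
  mkDerivation_X _ _ _

lemma polarDeriv_eq_sum [Fintype σ] (w : σ → R) (f : MvPolynomial σ R) :
    polarDeriv w f = ∑ i, C (w i) * pderiv i f := by
  classical
  induction f using MvPolynomial.induction_on with
  | C a => simp
  | add f g hf hg => simp only [map_add, hf, hg, mul_add, Finset.sum_add_distrib]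
  | mul_X f i hf =>
    simp only [Derivation.leibniz, polarDeriv_X, hf, pderiv_X, smul_eq_mul, mul_add,
      Finset.sum_add_distrib, Finset.mul_sum, Pi.single_apply, mul_ite, mul_one, mul_zero,
      Finset.sum_ite_eq, Finset.mem_univ, if_true]
    simp [mul_comm, mul_left_comm]

lemma isHomogeneous_polarDeriv [Finite σ] {f : MvPolynomial σ R} {d : ℕ}
    (hf : f.IsHomogeneous d) (w : σ → R) : (polarDeriv w f).IsHomogeneous (d - 1) := by
  cases nonempty_fintype σ
  rw [polarDeriv_eq_sum]
  exact IsHomogeneous.sum _ _ _ fun i _ => hf.pderiv.C_mul (w i)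

lemma eval_polarDeriv_self [Finite σ] {f : MvPolynomial σ R} {d : ℕ}
    (hf : f.IsHomogeneous d) (w : σ → R) : eval w (polarDeriv w f) = d * eval w f := by
  cases nonempty_fintype σ
  have euler := congrArg (eval w) hf.sum_X_mul_pderiv
  simpa [polarDeriv_eq_sum] using euler

/-- The restriction of a polynomial to the line `t ↦ p + t • w`, as a univariate polynomial in `t`;
it turns the polar derivative in direction `w` into the ordinary derivative. -/
def lineRestrict (p w : σ → R) : MvPolynomial σ R →ₐ[R] Polynomial R :=
  aeval fun i => Polynomial.C (p i) + Polynomial.X * Polynomial.C (w i)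

lemma eval_lineRestrict (p w : σ → R) (f : MvPolynomial σ R) (t : R) :
    (lineRestrict p w f).eval t = eval (p + t • w) f := by
  have h : (Polynomial.aeval t).comp (lineRestrict p w) = aeval (p + t • w) :=
    algHom_ext fun i => by simp [lineRestrict, mul_comm t]
  simpa [Polynomial.aeval_def, Polynomial.eval₂_eq_eval_map, aeval_eq_eval] using
    DFunLike.congr_fun h f

lemma derivative_lineRestrict (p w : σ → R) (f : MvPolynomial σ R) :
    (lineRestrict p w f).derivative = lineRestrict p w (polarDeriv w f) := by
  induction f using MvPolynomial.induction_on with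
  | C a => simp [lineRestrict]
  | add f g hf hg => simp [hf, hg]
  | mul_X f i hf =>
    simp only [map_mul, Polynomial.derivative_mul, hf, Derivation.leibniz, polarDeriv_X,
      smul_eq_mul, map_add, algHom_C, Polynomial.algebraMap_eq]
    simp only [lineRestrict, aeval_X, Polynomial.derivative_add, Polynomial.derivative_C,
      Polynomial.derivative_mul, Polynomial.derivative_X, mul_zero, add_zero, one_mul, zero_add]
    ring

lemma eval_add_smul_of_polarDeriv_eq_zero {R : Type*} [CommRing R] [IsDomain R] [CharZero R]
    {w : σ → R} {f : MvPolynomial σ R} (hf : polarDeriv w f = 0) (p : σ → R) (t : R) :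
    eval (p + t • w) f = eval p f := by
  have hconst : (lineRestrict p w f).natDegree = 0 :=
    Polynomial.derivative_eq_zero.mp (by rw [derivative_lineRestrict, hf, map_zero])
  obtain ⟨c, hc⟩ := Polynomial.natDegree_eq_zero.mp hconst
  have heval (s : R) : eval (p + s • w) f = c := by
    rw [← eval_lineRestrict, ← hc, Polynomial.eval_C]
  simpa using (heval t).trans (heval 0).symm

end PolarDerivative

lemma eval_smul_of_isHomogeneous {σ R : Type*} [CommSemiring R] {f : MvPolynomial σ R} {d : ℕ}
    (hf : f.IsHomogeneous d) (a : R) (v : σ → R) : eval (a • v) f = a ^ d * eval v f := by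
  simp only [eval_eq, Finset.mul_sum, Pi.smul_apply, smul_eq_mul, mul_pow, Finset.prod_mul_distrib,
    Finset.prod_pow_eq_pow_sum]
  refine Finset.sum_congr rfl fun m hm => ?_
  rw [← hf (mem_support_iff.mp hm), Finsupp.weight_apply]
  simp only [Finsupp.sum, Pi.one_apply, smul_eq_mul, mul_one]
  ring

lemma exists_eval_ne_zero {σ R : Type*} [CommRing R] [IsDomain R] [Infinite R]
    {P : MvPolynomial σ R} (hP : P ≠ 0) : ∃ v, eval v P ≠ 0 := by
  contrapose! hP
  exact MvPolynomial.funext fun v => by rw [hP v, map_zero]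

lemma encard_setOf_eval_eq_zero_le_derivative (g : Polynomial ℝ) :
    {t | g.eval t = 0}.encard ≤ {t | g.derivative.eval t = 0}.encard + 1 := by
  by_cases hg' : g.derivative = 0
  · simp [hg']
  have hg : g ≠ 0 := by
    rintro rfl
    simp at hg'
  have hroots {q : Polynomial ℝ} (hq : q ≠ 0) : {t | q.eval t = 0} = ↑q.roots.toFinset := by
    ext t
    simp [hq]
  rw [hroots hg, hroots hg', Set.encard_coe_eq_coe_finsetCard, Set.encard_coe_eq_coe_finsetCard]
  exact_mod_cast Polynomial.card_roots_toFinset_le_derivative g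

section LinearForms

lemma eval_lin (a b : ℝ) (v : Fin 2 → ℝ) : eval v (lin a b) = a * v 0 + b * v 1 := by
  simp [lin]

lemma isHomogeneous_lin (a b : ℝ) : (lin a b).IsHomogeneous 1 :=
  (isHomogeneous_C_mul_X a 0).add (isHomogeneous_C_mul_X b 1)

lemma coeff_ne_zero_of_eval_lin_ne_zero {a b : ℝ} {v : Fin 2 → ℝ} (h : eval v (lin a b) ≠ 0) :
    (a, b) ≠ (0, 0) := by
  intro hab
  obtain ⟨rfl, rfl⟩ := Prod.mk.inj hab
  simp [eval_lin] at h

lemma polarDeriv_lin (w : Fin 2 → ℝ) (a b : ℝ) :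
    polarDeriv w (lin a b) = C (eval w (lin a b)) := by
  simp [lin, polarDeriv_X, Derivation.leibniz]

lemma polarDeriv_C_mul_lin_pow (w : Fin 2 → ℝ) (c a b : ℝ) (d : ℕ) :
    polarDeriv w (C c * lin a b ^ d) = C (d * c * eval w (lin a b)) * lin a b ^ (d - 1) := by
  rw [← smul_eq_C_mul, Derivation.map_smul, Derivation.leibniz_pow, polarDeriv_lin]
  simp only [smul_eq_C_mul, nsmul_eq_mul, smul_eq_mul, map_mul, map_natCast]
  ring

lemma eval_polarDeriv_eq_eval_lin (f : MvPolynomial (Fin 2) ℝ) (v w : Fin 2 → ℝ) :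
    eval v (polarDeriv w f) = eval w (lin (eval v (pderiv 0 f)) (eval v (pderiv 1 f))) := by
  simp only [polarDeriv_eq_sum, Fin.sum_univ_two, map_add, map_mul, eval_C, eval_lin]
  ring

lemma exists_eq_lin_of_isHomogeneous_one {f : MvPolynomial (Fin 2) ℝ} (hf : f.IsHomogeneous 1) :
    ∃ a b, f = lin a b := by
  have hconst (i : Fin 2) : ∃ c, pderiv i f = C c :=
    ⟨_, totalDegree_eq_zero_iff_eq_C.mp ((totalDegree_zero_iff_isHomogeneous _).mpr hf.pderiv)⟩
  obtain ⟨a, ha⟩ := hconst 0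
  obtain ⟨b, hb⟩ := hconst 1
  refine ⟨a, b, ?_⟩
  have euler := hf.sum_X_mul_pderiv
  rw [Fin.sum_univ_two, ha, hb, one_nsmul] at euler
  rw [← euler, lin]
  ring

/-- The linear form `v ↦ v₀ w₁ - v₁ w₀`, whose only projective zero is `[w]` when `w ≠ 0`. -/
def vanishingForm (w : Fin 2 → ℝ) : MvPolynomial (Fin 2) ℝ := lin (w 1) (-w 0)

lemma eval_vanishingForm (v w : Fin 2 → ℝ) :
    eval v (vanishingForm w) = v 0 * w 1 - v 1 * w 0 := by
  rw [vanishingForm, eval_lin]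
  ring

lemma vanishingForm_ne_zero {w : Fin 2 → ℝ} (hw : w ≠ 0) : vanishingForm w ≠ 0 := by
  contrapose! hw
  have h0 := eval_vanishingForm ![0, 1] w
  have h1 := eval_vanishingForm ![1, 0] w
  ext i
  fin_cases i <;> simp_all

-- The Plücker relation between three vectors of the plane.
lemma eval_vanishingForm_smul (p v w : Fin 2 → ℝ) :
    eval p (vanishingForm w) • v =
      eval v (vanishingForm w) • p + eval p (vanishingForm v) • w := by
  ext i
  fin_cases i <;> simp [eval_vanishingForm] <;> ring

lemma eq_C_mul_vanishingForm_pow_of_polarDeriv_eq_zero {f : MvPolynomial (Fin 2) ℝ} {d : ℕ}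
    (hf : f.IsHomogeneous d) {w : Fin 2 → ℝ} (hw : w ≠ 0) (hfw : polarDeriv w f = 0) :
    ∃ c, f = C c * vanishingForm w ^ d := by
  obtain ⟨p, hp⟩ := exists_eval_ne_zero (vanishingForm_ne_zero hw)
  refine ⟨eval p f / eval p (vanishingForm w) ^ d, MvPolynomial.funext fun v => ?_⟩
  have hv : eval p (vanishingForm w) ^ d * eval v f = eval v (vanishingForm w) ^ d * eval p f := by
    rw [← eval_smul_of_isHomogeneous hf, eval_vanishingForm_smul p v w,
      eval_add_smul_of_polarDeriv_eq_zero hfw, eval_smul_of_isHomogeneous hf]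
  rw [map_mul, eval_C, map_pow]
  field_simp
  linear_combination hv

end LinearForms

section ProjectiveRoots

lemma mk_mem_projRoots_iff {f : MvPolynomial (Fin 2) ℝ} {d : ℕ} (hf : f.IsHomogeneous d)
    {v : Fin 2 → ℝ} (hv : v ≠ 0) : Projectivization.mk ℝ v hv ∈ projRoots f ↔ eval v f = 0 := by
  obtain ⟨a, ha⟩ := Projectivization.exists_smul_eq_mk_rep ℝ v hv
  rw [projRoots, Set.mem_ofPred_eq, ← ha, Units.smul_def, eval_smul_of_isHomogeneous hf]
  simp

lemma mk_eq_mk_iff_eval_vanishingForm {v w : Fin 2 → ℝ} (hv : v ≠ 0) (hw : w ≠ 0) :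
    Projectivization.mk ℝ v hv = Projectivization.mk ℝ w hw ↔ eval v (vanishingForm w) = 0 := by
  rw [Projectivization.mk_eq_mk_iff']
  constructor
  · rintro ⟨a, rfl⟩
    simp only [eval_vanishingForm, Pi.smul_apply, smul_eq_mul]
    ring
  · intro h
    obtain ⟨p, hp⟩ := exists_eval_ne_zero (vanishingForm_ne_zero hw)
    refine ⟨eval p (vanishingForm v) / eval p (vanishingForm w), ?_⟩
    have := eval_vanishingForm_smul p v w
    rw [h, zero_smul, zero_add] at this
    rw [div_eq_inv_mul, mul_smul, ← this, inv_smul_smul₀ hp]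

lemma eval_add_smul_vanishingForm (p w : Fin 2 → ℝ) (t : ℝ) :
    eval (p + t • w) (vanishingForm w) = eval p (vanishingForm w) := by
  simp only [eval_vanishingForm, Pi.add_apply, Pi.smul_apply, smul_eq_mul]
  ring

lemma add_smul_ne_zero {p w : Fin 2 → ℝ} (hp : eval p (vanishingForm w) ≠ 0) (t : ℝ) :
    p + t • w ≠ 0 := by
  intro h
  rw [← eval_add_smul_vanishingForm p w t, h, eval_vanishingForm] at hp
  simp at hp

/-- The affine chart `t ↦ [p + t w]` of the projective line, with `[w]` as its point at infinity. -/
def affinePoint {p w : Fin 2 → ℝ} (hp : eval p (vanishingForm w) ≠ 0) (t : ℝ) :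
    Projectivization ℝ (Fin 2 → ℝ) :=
  Projectivization.mk ℝ (p + t • w) (add_smul_ne_zero hp t)

section AffineChart

variable {p w : Fin 2 → ℝ} (hp : eval p (vanishingForm w) ≠ 0)

lemma affinePoint_injective : Function.Injective (affinePoint hp) := by
  intro s t hst
  rw [affinePoint, affinePoint, mk_eq_mk_iff_eval_vanishingForm] at hst
  have hzero : (t - s) * eval p (vanishingForm w) = 0 := by
    simp only [eval_vanishingForm, Pi.add_apply, Pi.smul_apply, smul_eq_mul] at hst ⊢
    linear_combination hst
  exact (sub_eq_zero.mp ((mul_eq_zero.mp hzero).resolve_right hp)).symm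

lemma affinePoint_eq_mk {v : Fin 2 → ℝ} (hv : v ≠ 0) (hvw : eval v (vanishingForm w) ≠ 0) :
    affinePoint hp (eval p (vanishingForm v) / eval v (vanishingForm w)) =
      Projectivization.mk ℝ v hv := by
  refine (Projectivization.mk_eq_mk_iff' ..).mpr
    ⟨eval p (vanishingForm w) / eval v (vanishingForm w), ?_⟩
  rw [div_eq_inv_mul, mul_smul, eval_vanishingForm_smul, smul_add, inv_smul_smul₀ hvw,
    div_eq_inv_mul, mul_smul]

lemma range_affinePoint (hw : w ≠ 0) :
    Set.range (affinePoint hp) = {Projectivization.mk ℝ w hw}ᶜ := by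
  ext P
  induction P using Projectivization.ind with | h v hv
  rw [Set.mem_compl_singleton_iff, ne_eq, mk_eq_mk_iff_eval_vanishingForm]
  constructor
  · rintro ⟨t, ht⟩
    rwa [← mk_eq_mk_iff_eval_vanishingForm hv hw, ← ht, affinePoint,
      mk_eq_mk_iff_eval_vanishingForm, eval_add_smul_vanishingForm]
  · exact fun hvw => ⟨_, affinePoint_eq_mk hp hv hvw⟩

include hp in
lemma encard_projRoots_sdiff_singleton {f : MvPolynomial (Fin 2) ℝ} {d : ℕ}
    (hf : f.IsHomogeneous d) (hw : w ≠ 0) :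
    (projRoots f \ {Projectivization.mk ℝ w hw}).encard =
      {t | (lineRestrict p w f).eval t = 0}.encard := by
  have hpreimage : {t | (lineRestrict p w f).eval t = 0} = affinePoint hp ⁻¹' projRoots f := by
    ext t
    rw [Set.mem_ofPred_eq, eval_lineRestrict, Set.mem_preimage, affinePoint,
      mk_mem_projRoots_iff hf]
  rw [hpreimage, ← (affinePoint_injective hp).encard_image, Set.image_preimage_eq_inter_range,
    range_affinePoint hp hw, Set.sdiff_eq]

end AffineChart

theorem encard_projRoots_le_polarDeriv {f : MvPolynomial (Fin 2) ℝ} {d : ℕ}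
    (hf : f.IsHomogeneous d) {w : Fin 2 → ℝ} (hw : w ≠ 0) :
    (projRoots f).encard ≤ (projRoots (polarDeriv w f)).encard + 1 := by
  obtain ⟨p, hp⟩ := exists_eval_ne_zero (vanishingForm_ne_zero hw)
  have hdf := isHomogeneous_polarDeriv hf w
  have hrolle : (projRoots f \ {Projectivization.mk ℝ w hw}).encard ≤
      (projRoots (polarDeriv w f) \ {Projectivization.mk ℝ w hw}).encard + 1 := by
    rw [encard_projRoots_sdiff_singleton hp hf hw, encard_projRoots_sdiff_singleton hp hdf hw,
      ← derivative_lineRestrict]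
    exact encard_setOf_eval_eq_zero_le_derivative _
  by_cases hfw : Projectivization.mk ℝ w hw ∈ projRoots f
  · -- A root at the point at infinity `[w]` of the chart survives, by Euler's formula.
    have hdfw : Projectivization.mk ℝ w hw ∈ projRoots (polarDeriv w f) := by
      rw [mk_mem_projRoots_iff hf] at hfw
      rw [mk_mem_projRoots_iff hdf, eval_polarDeriv_self hf, hfw, mul_zero]
    rw [← Set.encard_sdiff_singleton_add_one hfw, ← Set.encard_sdiff_singleton_add_one hdfw]
    gcongr
  · rw [Set.sdiff_singleton_eq_self hfw] at hrolle
    exact hrolle.trans (by gcongr; exact Set.sdiff_subset)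

lemma encard_projRoots_le_one_of_polarDeriv_eq_zero {f : MvPolynomial (Fin 2) ℝ} {d : ℕ}
    (hf : f.IsHomogeneous d) (hf0 : f ≠ 0) {w : Fin 2 → ℝ} (hw : w ≠ 0)
    (hfw : polarDeriv w f = 0) : (projRoots f).encard ≤ 1 := by
  obtain ⟨c, rfl⟩ := eq_C_mul_vanishingForm_pow_of_polarDeriv_eq_zero hf hw hfw
  have hc : c ≠ 0 := by
    rintro rfl
    simp at hf0
  suffices projRoots (C c * vanishingForm w ^ d) ⊆ {Projectivization.mk ℝ w hw} from
    (Set.encard_le_encard this).trans_eq (Set.encard_singleton _)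
  intro P hP
  induction P using Projectivization.ind with | h v hv
  rw [mk_mem_projRoots_iff hf, map_mul, eval_C, map_pow] at hP
  exact (mk_eq_mk_iff_eval_vanishingForm hv hw).mpr
    (eq_zero_of_pow_eq_zero ((mul_eq_zero.mp hP).resolve_left hc))

lemma infinite_projRoots_zero : (projRoots 0).Infinite := by
  have hw : (![1, 0] : Fin 2 → ℝ) ≠ 0 := by simp
  obtain ⟨p, hp⟩ := exists_eval_ne_zero (vanishingForm_ne_zero hw)
  suffices (projRoots 0 \ {Projectivization.mk ℝ _ hw}).encard = ⊤ from
    (Set.encard_eq_top_iff.mp this).mono Set.sdiff_subset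
  rw [encard_projRoots_sdiff_singleton hp (isHomogeneous_zero (Fin 2) ℝ 0) hw]
  simp

end ProjectiveRoots

section LowerBound

variable {f : MvPolynomial (Fin 2) ℝ} {d r : ℕ}

lemma HasDecomp.isHomogeneous (h : HasDecomp f d r) : f.IsHomogeneous d := by
  obtain ⟨c, a, b, -, rfl⟩ := h
  refine IsHomogeneous.sum _ _ _ fun j _ => IsHomogeneous.C_mul ?_ _
  simpa using (isHomogeneous_lin (a j) (b j)).pow d

lemma HasDecomp.exists_polarDeriv (h : HasDecomp f d (r + 1)) :
    ∃ w ≠ 0, HasDecomp (polarDeriv w f) (d - 1) r := by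
  obtain ⟨c, a, b, hab, rfl⟩ := h
  let w : Fin 2 → ℝ := ![-b 0, a 0]
  have hw : w ≠ 0 := by
    intro hw
    have ha : a 0 = 0 := congrFun hw 1
    have hb : b 0 = 0 := neg_eq_zero.mp (congrFun hw 0)
    exact hab 0 (Prod.ext ha hb)
  have hkill : eval w (lin (a 0) (b 0)) = 0 := by
    rw [eval_lin]
    exact add_eq_zero_iff_eq_neg.mpr (by simp [w, mul_comm])
  refine ⟨w, hw, fun j => d * c j.succ * eval w (lin (a j.succ) (b j.succ)), fun j => a j.succ,
    fun j => b j.succ, fun j => hab j.succ, ?_⟩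
  rw [map_sum, Fin.sum_univ_succ, polarDeriv_C_mul_lin_pow, hkill, mul_zero, C_0, zero_mul,
    zero_add]
  exact Finset.sum_congr rfl fun j _ => polarDeriv_C_mul_lin_pow ..

theorem HasDecomp.encard_projRoots_le (h : HasDecomp f d r) (hf : f ≠ 0) :
    (projRoots f).encard ≤ r := by
  induction r generalizing f d with
  | zero =>
    obtain ⟨c, a, b, -, hsum⟩ := h
    exact absurd (by simpa using hsum) hf
  | succ r ih =>
    obtain ⟨w, hw, hdec⟩ := h.exists_polarDeriv
    rw [Nat.cast_succ]
    by_cases hfw : polarDeriv w f = 0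
    · exact (encard_projRoots_le_one_of_polarDeriv_eq_zero h.isHomogeneous hf hw hfw).trans
        le_add_self
    · calc (projRoots f).encard
          ≤ (projRoots (polarDeriv w f)).encard + 1 :=
            encard_projRoots_le_polarDeriv h.isHomogeneous hw
        _ ≤ r + 1 := by gcongr; exact ih hdec hfw

end LowerBound

section UpperBound

variable {f : MvPolynomial (Fin 2) ℝ} {d r : ℕ} {S : Set (Fin 2 → ℝ)}

/-- `f` is a sum of `r` terms `cⱼ · ℓⱼ^d` with real linear forms `ℓⱼ` that vanish nowhere on `S`.
Integrating such a term in direction `w` divides by `ℓⱼ(w)`, so an induction on the degree has to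
keep track of a set `S` of directions to avoid. -/
def HasDecompOff (S : Set (Fin 2 → ℝ)) (f : MvPolynomial (Fin 2) ℝ) (d r : ℕ) : Prop :=
  ∃ c a b : Fin r → ℝ, (∀ j, ∀ v ∈ S, eval v (lin (a j) (b j)) ≠ 0) ∧
    f = ∑ j, C (c j) * lin (a j) (b j) ^ d

lemma HasDecompOff.hasDecomp (h : HasDecompOff S f d r) (hS : S.Nonempty) : HasDecomp f d r := by
  obtain ⟨v, hv⟩ := hS
  obtain ⟨c, a, b, hoff, hsum⟩ := h
  exact ⟨c, a, b, fun j => coeff_ne_zero_of_eval_lin_ne_zero (hoff j v hv), hsum⟩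

lemma hasDecompOff_one (hf : f.IsHomogeneous 1) (hS : ∀ v ∈ S, eval v f ≠ 0) :
    HasDecompOff S f 1 1 := by
  obtain ⟨a, b, rfl⟩ := exists_eq_lin_of_isHomogeneous_one hf
  exact ⟨fun _ => 1, fun _ => a, fun _ => b, fun _ => hS, by simp⟩

lemma HasDecompOff.of_polarDeriv (hf : f.IsHomogeneous (d + 1)) {w : Fin 2 → ℝ} (hw : w ≠ 0)
    (hwS : ∀ v ∈ S, eval v (vanishingForm w) ≠ 0)
    (h : HasDecompOff (insert w S) (polarDeriv w f) d r) : HasDecompOff S f (d + 1) (r + 1) := by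
  obtain ⟨c, a, b, hoff, hsum⟩ := h
  have hw_off (j : Fin r) : eval w (lin (a j) (b j)) ≠ 0 := hoff j w (Set.mem_insert w S)
  let c' (j : Fin r) : ℝ := c j / ((d + 1) * eval w (lin (a j) (b j)))
  let primitive : MvPolynomial (Fin 2) ℝ := ∑ j, C (c' j) * lin (a j) (b j) ^ (d + 1)
  have hhom : primitive.IsHomogeneous (d + 1) :=
    HasDecomp.isHomogeneous ⟨c', a, b, fun j => coeff_ne_zero_of_eval_lin_ne_zero (hw_off j), rfl⟩
  have hprimitive : polarDeriv w primitive = polarDeriv w f := by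
    rw [hsum, map_sum]
    refine Finset.sum_congr rfl fun j _ => ?_
    have hne := hw_off j
    have hcoeff : ((d + 1 : ℕ) : ℝ) * c' j * eval w (lin (a j) (b j)) = c j := by
      simp only [c', Nat.cast_add, Nat.cast_one]
      field_simp
    rw [polarDeriv_C_mul_lin_pow, hcoeff, Nat.add_sub_cancel]
  obtain ⟨c₀, hc₀⟩ := eq_C_mul_vanishingForm_pow_of_polarDeriv_eq_zero (hf.sub hhom) hw
    (by rw [map_sub, hprimitive, sub_self])
  refine ⟨Fin.cons c₀ c', Fin.cons (w 1) a, Fin.cons (-w 0) b, ?_, ?_⟩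
  · exact Fin.cases hwS fun j v hv => hoff j v (Set.mem_insert_of_mem w hv)
  · rw [Fin.sum_univ_succ]
    exact sub_eq_iff_eq_add.mp hc₀

lemma exists_forall_eval_polarDeriv_ne_zero {S : Finset (Fin 2 → ℝ)}
    (hd : d ≠ 0) (hf : f.IsHomogeneous d) (hf0 : f ≠ 0) (hS : ∀ v ∈ S, eval v f ≠ 0) :
    ∃ w, eval w f ≠ 0 ∧
      ∀ v ∈ S, eval v (vanishingForm w) ≠ 0 ∧ eval v (polarDeriv w f) ≠ 0 := by
  let gradForm (v : Fin 2 → ℝ) := lin (eval v (pderiv 0 f)) (eval v (pderiv 1 f))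
  have hvanish : ∀ v ∈ S, vanishingForm v ≠ 0 := by
    refine fun v hv => vanishingForm_ne_zero ?_
    rintro rfl
    apply hS 0 hv
    simpa [hd] using eval_smul_of_isHomogeneous hf 0 (0 : Fin 2 → ℝ)
  have hgrad : ∀ v ∈ S, gradForm v ≠ 0 := by
    intro v hv hzero
    have hpolar : (d : ℝ) * eval v f = 0 := by
      rw [← eval_polarDeriv_self hf, eval_polarDeriv_eq_eval_lin]
      exact (congrArg (eval v) hzero).trans (map_zero _)
    exact mul_ne_zero (Nat.cast_ne_zero.mpr hd) (hS v hv) hpolar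
  obtain ⟨w, hw⟩ := exists_eval_ne_zero (mul_ne_zero hf0 (Finset.prod_ne_zero_iff.mpr
    fun v hv => mul_ne_zero (hvanish v hv) (hgrad v hv)))
  simp only [map_mul, map_prod, mul_ne_zero_iff, Finset.prod_ne_zero_iff] at hw
  refine ⟨w, hw.1, fun v hv => ⟨?_, ?_⟩⟩
  · have hvw := (hw.2 v hv).1
    contrapose! hvw
    rw [eval_vanishingForm] at hvw ⊢
    linear_combination -hvw
  · rw [eval_polarDeriv_eq_eval_lin]
    exact (hw.2 v hv).2

theorem hasDecompOff_self {S : Finset (Fin 2 → ℝ)} (hf : f.IsHomogeneous (d + 1)) (hf0 : f ≠ 0)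
    (hS : ∀ v ∈ S, eval v f ≠ 0) : HasDecompOff S f (d + 1) (d + 1) := by
  induction d generalizing f S with
  | zero => exact hasDecompOff_one hf hS
  | succ d ih =>
    obtain ⟨w, hfw, hwS⟩ := exists_forall_eval_polarDeriv_ne_zero d.succ.succ_ne_zero hf hf0 hS
    have hpolar : eval w (polarDeriv w f) ≠ 0 := by
      rw [eval_polarDeriv_self hf]
      exact mul_ne_zero (Nat.cast_ne_zero.mpr d.succ.succ_ne_zero) hfw
    have hw : w ≠ 0 := by
      rintro rfl
      simp [polarDeriv_eq_sum] at hpolar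
    have hpolar0 : polarDeriv w f ≠ 0 := by
      intro h
      simp [h] at hpolar
    refine .of_polarDeriv hf hw (fun v hv => (hwS v hv).1) ?_
    rw [← Finset.coe_insert]
    exact ih (isHomogeneous_polarDeriv hf w) hpolar0
      (Finset.forall_mem_insert .. |>.mpr ⟨hpolar, fun v hv => (hwS v hv).2⟩)

theorem hasDecomp_self (hd : d ≠ 0) (hf : f.IsHomogeneous d) (hf0 : f ≠ 0) :
    HasDecomp f d d := by
  obtain ⟨d, rfl⟩ := Nat.exists_eq_succ_of_ne_zero hd
  obtain ⟨v, hv⟩ := exists_eval_ne_zero hf0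
  exact (hasDecompOff_self (S := {v}) hf hf0 (by simpa using hv)).hasDecomp (by simp)

end UpperBound

theorem stmt11_general {f : MvPolynomial (Fin 2) ℝ} {d : ℕ} (hd : d ≠ 0) (hf : f.IsHomogeneous d)
    (hroots : (projRoots f).ncard = d) : realRank f d = d := by
  have hfin : (projRoots f).Finite := Set.finite_of_ncard_ne_zero (hroots ▸ hd)
  have hf0 : f ≠ 0 := by
    rintro rfl
    exact infinite_projRoots_zero hfin
  have hdec : HasDecomp f d d := hasDecomp_self hd hf hf0
  refine le_antisymm (Nat.sInf_le hdec) (le_csInf ⟨d, hdec⟩ fun r hr => ?_)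
  have hle := hr.encard_projRoots_le hf0
  rwa [← hfin.cast_ncard_eq, hroots, Nat.cast_le] at hle

/-- a real binary quartic with distinct complex roots and four distinct
real roots has real rank 4. -/
theorem stmt11 (f : MvPolynomial (Fin 2) ℝ) (hf : f.IsHomogeneous 4)
    (hsf : SquarefreeC f) (hroots : (projRoots f).ncard = 4) :
    realRank f 4 = 4 :=
  stmt11_general four_ne_zero hf hroots
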